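/- Let $X$ be an infinite-dimensional real or complex Banach space, and let $Y_1\subset Y_2\subset\cdots$ be a countable system of linear subspaces of $X$ that is strictly nested in the sense that the closure $\overline{Y_n}$ is a proper subset of $Y_{n+1}$ for every $n\ge 1$ (for instance, closed subspaces with $Y_n\subsetneq Y_{n+1}$). Let $\{d_n\}_{n\ge1}$ be a non-increasing sequence of non-negative real numbers that is strictly decreasing as long as it is positive, i.e. $d_{n+1}<d_n$ whenever $d_n>0$. Assume that there exists a natural number $n_0\ge 1$ such that $$d_n>\sum_{k=n+1}^{\infty}d_k\quad\text{for all } n\ge n_0 \text{ at which } d_n>0$$ (in particular, the series on the right converges for these $n$). Then there is an element $x\in X$ such that $\rho(x,Y_n)=d_n$ for all $n\ge1$, where $\rho(x,Y)=\inf\{\|x-y\|:y\in Y\}$. -/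

import Mathlib

open Metric Set

section InfDist

variable {𝕜 X : Type*} [RCLike 𝕜] [NormedAddCommGroup X] [NormedSpace 𝕜 X]

theorem Submodule.infDist_eq_norm_mkQ (Y : Submodule 𝕜 X) (x : X) :
    infDist x (Y : Set X) = ‖Y.mkQ x‖ :=
  (QuotientAddGroup.norm_mk (S := Y.toAddSubgroup) x).symm

theorem Submodule.infDist_add_of_mem (Y : Submodule 𝕜 X) (x : X) {y : X} (hy : y ∈ Y) :
    infDist (x + y) (Y : Set X) = infDist x (Y : Set X) := by
  have : Y.mkQ y = 0 := by simpa using hy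
  rw [Y.infDist_eq_norm_mkQ, Y.infDist_eq_norm_mkQ, map_add, this, add_zero]

theorem Submodule.infDist_smul (Y : Submodule 𝕜 X) (c : 𝕜) (x : X) :
    infDist (c • x) (Y : Set X) = ‖c‖ * infDist x (Y : Set X) := by
  rw [Y.infDist_eq_norm_mkQ, Y.infDist_eq_norm_mkQ, map_smul, norm_smul]

theorem Submodule.infDist_le_norm (Y : Submodule 𝕜 X) (x : X) :
    infDist x (Y : Set X) ≤ ‖x‖ := by
  simpa using infDist_le_dist_of_mem (x := x) Y.zero_mem

theorem Submodule.exists_norm_sub_lt (Y : Submodule 𝕜 X) (x : X) {r : ℝ}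
    (h : infDist x (Y : Set X) < r) : ∃ y ∈ Y, ‖x - y‖ < r := by
  obtain ⟨y, hy, hxy⟩ := (infDist_lt_iff ⟨0, Y.zero_mem⟩).1 h
  exact ⟨y, hy, by rwa [← dist_eq_norm]⟩

/-- If `x` has distance at most `r` from `Y`, then moving `x` along `z` by at most `r / ρ(z, Y)`,
in a suitable direction, makes the distance equal to `r`. -/
theorem Submodule.exists_infDist_add_smul_eq (Y : Submodule 𝕜 X) (x z : X) {r T : ℝ}
    (hT : 0 ≤ T) (hx : infDist x (Y : Set X) ≤ r) (hz : r ≤ T * infDist z (Y : Set X)) :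
    ∃ t : ℝ, t ∈ Icc (-T) T ∧ infDist (x + (t : 𝕜) • z) (Y : Set X) = r := by
  have hcont : Continuous fun t : ℝ => infDist (x + (t : 𝕜) • z) (Y : Set X) :=
    (continuous_infDist_pt _).comp (by fun_prop)
  have h0 : infDist (x + ((0 : ℝ) : 𝕜) • z) (Y : Set X) ≤ r := by simpa using hx
  have hsum : 2 * (T * infDist z (Y : Set X)) ≤ infDist (x + (T : 𝕜) • z) (Y : Set X) +
      infDist (x + ((-T : ℝ) : 𝕜) • z) (Y : Set X) := by
    have h := norm_sub_le (Y.mkQ (x + (T : 𝕜) • z)) (Y.mkQ (x + ((-T : ℝ) : 𝕜) • z))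
    have e : x + (T : 𝕜) • z - (x + ((-T : ℝ) : 𝕜) • z) = ((2 * T : ℝ) : 𝕜) • z := by
      push_cast
      module
    rw [← map_sub, e] at h
    simp only [← Submodule.infDist_eq_norm_mkQ] at h
    rw [Y.infDist_smul, RCLike.norm_ofReal, abs_of_nonneg (by positivity)] at h
    linarith
  rcases le_total r (infDist (x + (T : 𝕜) • z) (Y : Set X)) with h | h
  · obtain ⟨t, ht, e⟩ := intermediate_value_Icc hT hcont.continuousOn ⟨h0, h⟩
    exact ⟨t, ⟨by linarith [ht.1], ht.2⟩, e⟩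
  · obtain ⟨t, ht, e⟩ := intermediate_value_Icc' (neg_nonpos.2 hT) hcont.continuousOn
      ⟨h0, by linarith⟩
    exact ⟨t, ⟨ht.1, by linarith [ht.2]⟩, e⟩

theorem Submodule.infDist_pos_of_notMem_topologicalClosure {Y : Submodule 𝕜 X} {z : X}
    (hz : z ∉ Y.topologicalClosure) : 0 < infDist z (Y : Set X) :=
  (infDist_pos_iff_notMem_closure ⟨0, Y.zero_mem⟩).1 hz

/-- An almost orthogonal vector of prescribed distance. -/
theorem Submodule.exists_mem_infDist_eq_norm_lt {Y Z : Submodule 𝕜 X}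
    (h : Y.topologicalClosure < Z) {r s : ℝ} (hr : 0 ≤ r) (hrs : r < s) :
    ∃ z ∈ Z, infDist z (Y : Set X) = r ∧ ‖z‖ < s := by
  obtain ⟨z, hzZ, hzY⟩ := SetLike.exists_of_lt h
  have hpos := infDist_pos_of_notMem_topologicalClosure hzY
  set w : X := ((r / infDist z (Y : Set X) : ℝ) : 𝕜) • z with hw
  have hwr : infDist w (Y : Set X) = r := by
    rw [hw, Y.infDist_smul, RCLike.norm_ofReal, abs_of_nonneg (by positivity)]
    field_simp
  obtain ⟨y, hy, hlt⟩ := Y.exists_norm_sub_lt w (r := s) (by rwa [hwr])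
  refine ⟨w - y, Z.sub_mem (Z.smul_mem _ hzZ) (h.le (Y.le_topologicalClosure hy)), ?_, hlt⟩
  rw [sub_eq_add_neg, Y.infDist_add_of_mem w (Y.neg_mem hy), hwr]

end InfDist

section Lethargy

variable {𝕜 X : Type*} [RCLike 𝕜] [NormedAddCommGroup X] [NormedSpace 𝕜 X]

theorem Submodule.monotone_of_topologicalClosure_lt_succ {Y : ℕ → Submodule 𝕜 X}
    (hY : ∀ n, (Y n).topologicalClosure < Y (n + 1)) : Monotone Y :=
  monotone_nat_of_le_succ fun n => (Y n).le_topologicalClosure.trans (hY n).le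

/-- An element with prescribed distances from all but finitely many of the subspaces can be
modified to have prescribed distances from all of them. -/
theorem exists_infDist_eq_of_eventually_eq {Y : ℕ → Submodule 𝕜 X}
    (hY : ∀ n, (Y n).topologicalClosure < Y (n + 1))
    {d : ℕ → ℝ} (hd_nonneg : ∀ n, 0 ≤ d n) (hd_anti : Antitone d)
    (hd_strict : ∀ n, 0 < d n → d (n + 1) < d n) (N : ℕ)
    (h : ∃ x : X, ∀ n ≥ N, infDist x (Y n : Set X) = d n) :
    ∃ x : X, ∀ n, infDist x (Y n : Set X) = d n := by
  have hmono := Submodule.monotone_of_topologicalClosure_lt_succ hY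
  induction N with
  | zero => simpa using h
  | succ N ih =>
    refine ih ?_
    obtain ⟨x, hx⟩ := h
    rcases (hd_nonneg N).eq_or_lt with h0 | hpos
    · refine ⟨0, fun n hn => ?_⟩
      rw [infDist_zero_of_mem (Y n).zero_mem]
      exact le_antisymm (hd_nonneg n) ((hd_anti hn).trans h0.ge)
    obtain ⟨y, hy, hxy⟩ := (Y (N + 1)).exists_norm_sub_lt x (r := d N)
      (by rw [hx (N + 1) le_rfl]; exact hd_strict N hpos)
    obtain ⟨z, hzZ, hzY, -⟩ := Submodule.exists_mem_infDist_eq_norm_lt (hY N) hpos.le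
      (lt_add_one (d N))
    obtain ⟨t, -, ht⟩ := (Y N).exists_infDist_add_smul_eq (x - y) z zero_le_one
      (((Y N).infDist_le_norm _).trans hxy.le) (by rw [one_mul, hzY])
    refine ⟨x - y + (t : 𝕜) • z, fun n hn => ?_⟩
    rcases hn.eq_or_lt with rfl | hlt
    · exact ht
    · have e : x - y + (t : 𝕜) • z = x + (-y + (t : 𝕜) • z) := by abel
      rw [e, (Y n).infDist_add_of_mem x, hx n hlt]
      exact hmono hlt ((Y (N + 1)).add_mem ((Y (N + 1)).neg_mem hy)
        ((Y (N + 1)).smul_mem _ hzZ))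

/-- Positive slacks `δ n` admit positive perturbations whose tails stay within the slacks. -/
theorem exists_pos_tail_tsum_le {δ : ℕ → ℝ} (hδ : ∀ n, 0 < δ n) :
    ∃ η : ℕ → ℝ, (∀ n, 0 < η n) ∧ Summable η ∧ ∀ n, ∑' k, η (n + 1 + k) ≤ δ n := by
  set m : ℕ → ℝ := fun k => (Finset.range (k + 1)).inf' Finset.nonempty_range_add_one δ with hm
  have hmpos : ∀ k, 0 < m k := fun k => by
    simp only [hm, Finset.lt_inf'_iff]
    exact fun i _ => hδ i
  have hmle : ∀ {n k}, n ≤ k → m k ≤ δ n := fun {n k} h =>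
    Finset.inf'_le _ (Finset.mem_range.2 (by lia))
  have hgeom : Summable fun k : ℕ => (1 / 2 : ℝ) ^ k * (1 / 2) :=
    summable_geometric_two.mul_right _
  have hhalf : ∑' k : ℕ, (1 / 2 : ℝ) ^ k * (1 / 2) = 1 := by
    rw [tsum_mul_right, tsum_geometric_two]; norm_num
  have hpos : ∀ k, 0 < (1 / 2 : ℝ) ^ k * (1 / 2) * m k := fun k => by
    have := hmpos k; positivity
  have hsum : Summable fun k : ℕ => (1 / 2 : ℝ) ^ k * (1 / 2) * m k :=
    Summable.of_nonneg_of_le (fun k => (hpos k).le)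
      (fun k => mul_le_mul_of_nonneg_left (hmle (Nat.zero_le k)) (by positivity))
      (hgeom.mul_right (δ 0))
  refine ⟨_, hpos, hsum, fun n => ?_⟩
  calc ∑' k, (1 / 2 : ℝ) ^ (n + 1 + k) * (1 / 2) * m (n + 1 + k)
      ≤ ∑' k : ℕ, (1 / 2 : ℝ) ^ k * (1 / 2) * δ n := by
        refine Summable.tsum_le_tsum (fun k => ?_)
          (hsum.comp_injective (add_right_injective (n + 1))) (hgeom.mul_right _)
        have h1 : (1 / 2 : ℝ) ^ (n + 1 + k) ≤ (1 / 2) ^ k :=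
          pow_le_pow_of_le_one (by norm_num) (by norm_num) (by lia)
        have h2 := hmle (n := n) (k := n + 1 + k) (by lia)
        have h3 := hmpos (n + 1 + k)
        gcongr
    _ = δ n := by rw [tsum_mul_right, hhalf, one_mul]

variable [CompleteSpace X]

/-- If `ρ(z n, Y n) = d n` and the tails of `∑ ‖z k‖` are dominated by `d`, then some series
`∑ t k • z k` with real coefficients in `[-1, 1]` has the prescribed distances: finitely many
distances are attained by choosing the coefficients one after the other, downwards, and
compactness of the cube of coefficients gives all of them. -/
theorem exists_infDist_tsum_eq {Y : ℕ → Submodule 𝕜 X} (hmono : Monotone Y) {d : ℕ → ℝ}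
    {z : ℕ → X} (hz_mem : ∀ n, z n ∈ Y (n + 1)) (hz : ∀ n, infDist (z n) (Y n : Set X) = d n)
    (hsum : Summable fun n => ‖z n‖) (htail : ∀ n, ∑' k, ‖z (n + 1 + k)‖ ≤ d n) :
    ∃ t : ℕ → ℝ, ∀ n, infDist (∑' k, (t k : 𝕜) • z k) (Y n : Set X) = d n := by
  set K : Set (ℕ → ℝ) := univ.pi fun _ => Icc (-1) 1 with hK
  have hKc : IsCompact K := isCompact_univ_pi fun _ => isCompact_Icc
  set F : (ℕ → ℝ) → X := fun t => ∑' k, (t k : 𝕜) • z k with hF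
  have hbound : ∀ t ∈ K, ∀ k, ‖(t k : 𝕜) • z k‖ ≤ ‖z k‖ := fun t ht k => by
    rw [norm_smul, RCLike.norm_ofReal]
    exact mul_le_of_le_one_left (norm_nonneg _) (abs_le.2 (ht k (mem_univ k)))
  have hFsum : ∀ t ∈ K, Summable fun k => (t k : 𝕜) • z k := fun t ht =>
    Summable.of_norm_bounded hsum (hbound t ht)
  have hFcont : ContinuousOn F K :=
    continuousOn_tsum (fun k => Continuous.continuousOn (by fun_prop)) hsum
      fun k t ht => hbound t ht k
  have hfin : ∀ N m, m ≤ N + 1 → ∃ t ∈ K, (∀ k < m, t k = 0) ∧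
      ∀ n, m ≤ n → n ≤ N → infDist (F t) (Y n : Set X) = d n := by
    intro N m hm
    induction hm using Nat.decreasingInduction with
    | self => exact ⟨0, fun _ _ => by simp, fun _ _ => rfl, fun n h1 h2 => by lia⟩
    | of_succ m hm ih =>
      obtain ⟨t, htK, ht0, ht⟩ := ih
      have hnorm : ‖F t‖ ≤ d m := by
        have e : F t = ∑' k, (t (m + 1 + k) : 𝕜) • z (m + 1 + k) := by
          rw [hF]
          simp only
          rw [← (hFsum t htK).sum_add_tsum_nat_add (m + 1), Finset.sum_eq_zero, zero_add]
          · simp only [add_comm]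
          · intro k hk
            simp [ht0 k (Finset.mem_range.1 hk)]
        rw [e]
        exact (tsum_of_norm_bounded
          (hsum.comp_injective (add_right_injective (m + 1))).hasSum
          fun k => hbound t htK _).trans (htail m)
      obtain ⟨s, hs, hse⟩ := (Y m).exists_infDist_add_smul_eq (F t) (z m) zero_le_one
        (((Y m).infDist_le_norm _).trans hnorm) (by rw [one_mul, hz])
      have hFt : F (Function.update t m s) = F t + (s : 𝕜) • z m := by
        have h1 : HasSum (fun k => (if k = m then (s : 𝕜) • z m else 0)) ((s : 𝕜) • z m) :=
          hasSum_ite_eq m _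
        have h2 := (hFsum t htK).hasSum.add h1
        rw [hF]
        convert h2.tsum_eq using 3 with k
        rcases eq_or_ne k m with rfl | hne
        · simp [ht0 k (Nat.lt_succ_self k)]
        · simp [hne]
      refine ⟨Function.update t m s, fun k _ => ?_, fun k hk => ?_, fun n hmn hnN => ?_⟩
      · rcases eq_or_ne k m with rfl | hne
        · simpa using hs
        · simpa [hne] using htK k (mem_univ k)
      · rw [Function.update_of_ne hk.ne, ht0 k (by lia)]
      · rw [hFt]
        rcases hmn.eq_or_lt with rfl | hlt
        · exact hse
        · rw [(Y n).infDist_add_of_mem, ht n hlt hnN]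
          exact hmono hlt ((Y (m + 1)).smul_mem _ (hz_mem m))
  set C : ℕ → Set (ℕ → ℝ) := fun N =>
    K ∩ F ⁻¹' {x | ∀ n ≤ N, infDist x (Y n : Set X) = d n} with hC
  have hCcl : ∀ N, IsClosed (C N) := fun N => by
    refine hFcont.preimage_isClosed_of_isClosed hKc.isClosed ?_
    simp only [ofPred_forall]
    exact isClosed_iInter fun n => isClosed_iInter fun _ =>
      isClosed_eq (continuous_infDist_pt _) continuous_const
  obtain ⟨t, ht⟩ := IsCompact.nonempty_iInter_of_sequence_nonempty_isCompact_isClosed C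
    (fun N t ht => ⟨ht.1, fun n hn => ht.2 n (by lia)⟩)
    (fun N => by
      obtain ⟨t, htK, -, ht⟩ := hfin N 0 (by lia)
      exact ⟨t, htK, fun n hn => ht n (Nat.zero_le n) hn⟩)
    (hKc.of_isClosed_subset (hCcl 0) inter_subset_left) hCcl
  exact ⟨t, fun n => (mem_iInter.1 ht n).2 n le_rfl⟩

theorem exists_infDist_eq_of_tail_tsum_lt {Y : ℕ → Submodule 𝕜 X}
    (hY : ∀ n, (Y n).topologicalClosure < Y (n + 1))
    {d : ℕ → ℝ} (hd_nonneg : ∀ n, 0 ≤ d n) (hd_sum : Summable d)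
    (hd_tail : ∀ n, ∑' k, d (n + 1 + k) < d n) :
    ∃ x : X, ∀ n, infDist x (Y n : Set X) = d n := by
  obtain ⟨η, hη, hηsum, hηtail⟩ := exists_pos_tail_tsum_le fun n => sub_pos.2 (hd_tail n)
  choose z hz_mem hz hz_norm using fun n =>
    Submodule.exists_mem_infDist_eq_norm_lt (hY n) (hd_nonneg n) (lt_add_of_pos_right (d n) (hη n))
  have hsum : Summable fun n => ‖z n‖ :=
    Summable.of_nonneg_of_le (fun _ => norm_nonneg _) (fun n => (hz_norm n).le)
      (hd_sum.add hηsum)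
  obtain ⟨t, ht⟩ := exists_infDist_tsum_eq (𝕜 := 𝕜)
    (Submodule.monotone_of_topologicalClosure_lt_succ hY) hz_mem hz hsum fun n => by
      have inj := add_right_injective (n + 1)
      have hd' : Summable fun k => d (n + 1 + k) := hd_sum.comp_injective inj
      have hη' : Summable fun k => η (n + 1 + k) := hηsum.comp_injective inj
      calc ∑' k, ‖z (n + 1 + k)‖ ≤ ∑' k, (d (n + 1 + k) + η (n + 1 + k)) :=
            Summable.tsum_le_tsum (fun k => (hz_norm _).le) (hsum.comp_injective inj)
              (hd'.add hη')
        _ = ∑' k, d (n + 1 + k) + ∑' k, η (n + 1 + k) := hd'.tsum_add hη'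
        _ ≤ d n := by linarith [hηtail n]
  exact ⟨_, ht⟩

end Lethargy

/-- The sequences are indexed from `0` instead of `1`. `Metric.infDist x (Y n)` is `ρ(x, Yₙ)`.
The inequality between `d n` and the tail of the series includes the convergence of the tail. -/
theorem stmt_5 {𝕜 : Type*} [RCLike 𝕜]
    {X : Type*} [NormedAddCommGroup X] [NormedSpace 𝕜 X] [CompleteSpace X]
    (hinf : ¬ FiniteDimensional 𝕜 X)
    (Y : ℕ → Submodule 𝕜 X) (hY : ∀ n, (Y n).topologicalClosure < Y (n + 1))
    (d : ℕ → ℝ) (hd_nonneg : ∀ n, 0 ≤ d n) (hd_anti : Antitone d)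
    (hd_strict : ∀ n, 0 < d n → d (n + 1) < d n)
    (hd_tail : ∃ n₀ : ℕ, ∀ n ≥ n₀, 0 < d n →
      Summable (fun k : ℕ => d (n + 1 + k)) ∧ ∑' k : ℕ, d (n + 1 + k) < d n) :
    ∃ x : X, ∀ n, Metric.infDist x (Y n : Set X) = d n := by
  by_cases hzero : ∃ N, d N = 0
  · obtain ⟨N, hN⟩ := hzero
    refine exists_infDist_eq_of_eventually_eq hY hd_nonneg hd_anti hd_strict N ⟨0, fun n hn => ?_⟩
    rw [infDist_zero_of_mem (Y n).zero_mem]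
    exact le_antisymm (hd_nonneg n) ((hd_anti hn).trans hN.le)
  · push Not at hzero
    have hpos : ∀ n, 0 < d n := fun n => (hd_nonneg n).lt_of_ne' (hzero n)
    obtain ⟨N, hN⟩ := hd_tail
    refine exists_infDist_eq_of_eventually_eq hY hd_nonneg hd_anti hd_strict N ?_
    have hsum : Summable d := by
      have h := (hN N le_rfl (hpos N)).1
      simp only [add_comm (N + 1)] at h
      exact (summable_nat_add_iff (N + 1)).1 h
    obtain ⟨x, hx⟩ := exists_infDist_eq_of_tail_tsum_lt (Y := fun n => Y (N + n))
      (d := fun n => d (N + n)) (fun n => hY (N + n)) (fun n => hd_nonneg _)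
      (hsum.comp_injective (add_right_injective N))
      fun n => by simpa only [add_assoc] using (hN (N + n) (by lia) (hpos _)).2
    refine ⟨x, fun n hn => ?_⟩
    obtain ⟨k, rfl⟩ := Nat.exists_eq_add_of_le hn
    exact hx k
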